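/- arXiv:2305.17133 — 2 statements merged into one kernel-verified Lean document; each statement's English description precedes it below -/
import Mathlib

section
/- Let γ : I → ℝ³ be a smooth non-degenerate curve with γ^{(j)}(0) = e_j for 1 ≤ j ≤ 3 and γ₃(0) > 0, and let χ ∈ C^∞(ℝ) be non-negative, supported in the interior of I, with χ(0) > 0. Let 1 ≤ p, q ≤ ∞. If there exists a constant C such that ‖M_γ f‖_{L^q(ℝ³)} ≤ C ‖f‖_{L^p(ℝ³)} for all bounded, compactly supported measurable functions f on ℝ³, then 6/p ≤ 1 + 3/q. -/
open MeasureTheory Real Set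
open scoped ENNReal ContDiff

noncomputable section

abbrev E3 : Type := EuclideanSpace ℝ (Fin 3)

/-- The interval `I = [-1,1]`. -/
def I1 : Set ℝ := Set.Icc (-1 : ℝ) 1

/-- Determinant of three vectors in `ℝ³`. -/
def det3 (v w z : E3) : ℝ :=
  Matrix.det !![v 0, w 0, z 0; v 1, w 1, z 1; v 2, w 2, z 2]

/-- The averaging operator `A_t f(x) = ∫ f(x - tγ(s)) χ(s) ds`. -/
def avgOp (γ : ℝ → E3) (χ : ℝ → ℝ) (t : ℝ) (f : E3 → ℝ) (x : E3) : ℝ :=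
  ∫ s : ℝ, f (x - t • γ s) * χ s

/-- The local maximal function `M_γ f(x) = sup_{1 ≤ t ≤ 2} |A_t f(x)|`. -/
def maxOp (γ : ℝ → E3) (χ : ℝ → ℝ) (f : E3 → ℝ) (x : E3) : ℝ :=
  ⨆ t : Set.Icc (1:ℝ) 2, |avgOp γ χ t f x|

/-!
Test `M_γ` on the indicator of a box with sides comparable to `r, r², r³`. By Taylor's theorem
`γ s - γ 0` stays in such a box for `0 ≤ s ≤ r`, so `M_γ f ≳ r` on the region swept out by a
translate of the box centred at `t • γ 0`, `1 ≤ t ≤ 2`. Since `γ₃(0) ≠ 0`, the direction `γ 0` is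
transversal to the plane of the two long sides, and the region has volume `≳ r · r² · 1 = r³`. The
`L^p → L^q` bound then reads `r · r^(3/q) ≲ r^(6/p)`, and letting `r → 0` compares the exponents.
-/

open Filter Topology Asymptotics
open scoped NNReal Pointwise

section Taylor

variable {E : Type*} [NormedAddCommGroup E] [NormedSpace ℝ E]

lemma isBigO_sub_pow_succ_of_iteratedDeriv_eq_zero {f : ℝ → E} {a : ℝ} {n : ℕ}
    (hf : ContDiff ℝ (n + 1) f) (hzero : ∀ k ∈ Finset.Icc 1 n, iteratedDeriv k f a = 0) :
    (fun x ↦ f x - f a) =O[𝓝 a] fun x ↦ (x - a) ^ (n + 1) := by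
  have hlead : ∀ x, taylorWithinEval f (n + 1) univ a x =
      f a + (((n + 1).factorial : ℝ)⁻¹ * (x - a) ^ (n + 1)) • iteratedDeriv (n + 1) f a := by
    intro x
    have hmid : ∑ k ∈ Finset.range n, (((k + 1).factorial : ℝ)⁻¹ * (x - a) ^ (k + 1)) •
        iteratedDeriv (k + 1) f a = 0 :=
      Finset.sum_eq_zero fun k hk ↦ by
        have hk' : k + 1 ∈ Finset.Icc 1 n :=
          Finset.mem_Icc.2 ⟨k.succ_pos, Finset.mem_range.1 hk⟩
        rw [hzero (k + 1) hk', smul_zero]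
    rw [taylor_within_apply, Finset.sum_range_succ, Finset.sum_range_succ']
    simp [iteratedDerivWithin_univ, hmid]
  have hrem := (taylor_isLittleO_univ (x₀ := a) (by exact_mod_cast hf)).isBigO
  have hterm : (fun x ↦ (((n + 1).factorial : ℝ)⁻¹ * (x - a) ^ (n + 1)) •
      iteratedDeriv (n + 1) f a) =O[𝓝 a] fun x ↦ (x - a) ^ (n + 1) := by
    refine .of_bound (((n + 1).factorial : ℝ)⁻¹ * ‖iteratedDeriv (n + 1) f a‖) (.of_forall ?_)
    intro x
    rw [norm_smul, norm_mul, norm_inv, Real.norm_natCast]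
    exact le_of_eq (by ring)
  refine (hrem.add hterm).congr_left fun x ↦ ?_
  rw [hlead]
  abel

lemma iteratedDeriv_euclideanSpace_apply {ι : Type*} [Fintype ι] {γ : ℝ → EuclideanSpace ℝ ι}
    {n : ℕ} {s : ℝ} (hγ : ContDiffAt ℝ n γ s) (i : ι) :
    iteratedDeriv n (fun u ↦ γ u i) s = iteratedDeriv n γ s i := by
  have h := (EuclideanSpace.proj i : EuclideanSpace ℝ ι →L[ℝ] ℝ).iteratedFDeriv_comp_left
    hγ le_rfl
  rw [iteratedDeriv, iteratedDeriv]
  exact congrArg (fun A ↦ A fun _ ↦ 1) h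

lemma isBigO_apply_sub_pow_succ_of_iteratedDeriv_apply_eq_zero {d : ℕ}
    {γ : ℝ → EuclideanSpace ℝ (Fin d)} {a : ℝ} (hγ : ContDiff ℝ d γ)
    (hzero : ∀ i : Fin d, ∀ k ∈ Finset.Icc 1 (i : ℕ), iteratedDeriv k γ a i = 0) (i : Fin d) :
    (fun s ↦ γ s i - γ a i) =O[𝓝 a] fun s ↦ (s - a) ^ ((i : ℕ) + 1) := by
  have hγi : ContDiff ℝ (i + 1) fun s ↦ γ s i :=
    (contDiff_euclidean.1 hγ i).of_le (by exact_mod_cast Nat.succ_le_of_lt i.isLt)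
  refine isBigO_sub_pow_succ_of_iteratedDeriv_eq_zero hγi fun k hk ↦ ?_
  have hkd : k ≤ d := (Finset.mem_Icc.1 hk).2.trans i.isLt.le
  rw [iteratedDeriv_euclideanSpace_apply (hγ.of_le (by exact_mod_cast hkd)).contDiffAt]
  exact hzero i k hk

end Taylor

section Boxes

variable {ι : Type*}

/-- The box in `ℝ^ι` centred at the origin with half side lengths `ρ i`. -/
def coordBox (ρ : ι → ℝ) : Set (EuclideanSpace ℝ ι) :=
  {x | ∀ i, |x i| ≤ ρ i}

/-- The region swept out by the box `coordBox ρ` when its centre runs along the segment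
`{t v : 1 ≤ t ≤ 2}`. -/
def sweptBox (v : EuclideanSpace ℝ ι) (ρ : ι → ℝ) : Set (EuclideanSpace ℝ ι) :=
  (fun t : ℝ ↦ t • v) '' Icc 1 2 + coordBox ρ

lemma sub_smul_mem_coordBox {ρ : ι → ℝ} {K t : ℝ} {u w : EuclideanSpace ℝ ι}
    (hu : u ∈ coordBox ρ) (hw : w ∈ coordBox (K • ρ)) :
    u - t • w ∈ coordBox ((1 + |t| * K) • ρ) := by
  intro i
  calc |u i - t * w i| ≤ |u i| + |t| * |w i| := by
        rw [← abs_mul]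
        exact abs_sub _ _
    _ ≤ ρ i + |t| * (K * ρ i) := by gcongr; exacts [hu i, hw i]
    _ = (1 + |t| * K) * ρ i := by ring

lemma coordBox_mono {ρ ρ' : ι → ℝ} (h : ρ ≤ ρ') : coordBox ρ ⊆ coordBox ρ' :=
  fun _ hx i ↦ (hx i).trans (h i)

lemma isCompact_coordBox (ρ : ι → ℝ) : IsCompact (coordBox ρ) := by
  have : coordBox ρ = WithLp.ofLp ⁻¹' Icc (-ρ) ρ := by
    ext x
    simp only [coordBox, mem_ofPred_eq, abs_le, mem_preimage, mem_Icc, Pi.le_def, Pi.neg_apply,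
      forall_and]
  rw [this]
  exact (PiLp.homeomorph 2 fun _ ↦ ℝ).isCompact_preimage.2 isCompact_Icc

lemma isCompact_sweptBox [Finite ι] (v : EuclideanSpace ℝ ι) (ρ : ι → ℝ) :
    IsCompact (sweptBox v ρ) := by
  cases nonempty_fintype ι
  exact (isCompact_Icc.image (continuous_id.smul continuous_const)).add (isCompact_coordBox ρ)

variable [Fintype ι]

lemma volume_setOf_forall_mem_Icc (a b : ι → ℝ) :
    volume {x : EuclideanSpace ℝ ι | ∀ i, x i ∈ Icc (a i) (b i)} =
      ∏ i, ENNReal.ofReal (b i - a i) := by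
  rw [← Real.volume_Icc_pi,
    ← (PiLp.volume_preserving_ofLp ι).measure_preimage measurableSet_Icc.nullMeasurableSet]
  congr 1
  ext x
  simp only [mem_ofPred_eq, mem_preimage, mem_Icc, Pi.le_def, forall_and]

lemma volume_coordBox (ρ : ι → ℝ) : volume (coordBox ρ) = ∏ i, ENNReal.ofReal (2 * ρ i) := by
  simpa only [coordBox, abs_le, mem_Icc, Pi.neg_apply, sub_neg_eq_add, two_mul] using
    volume_setOf_forall_mem_Icc (-ρ) ρ

variable [DecidableEq ι]

-- The linear map fixing `e_i` for `i ≠ k` and sending `e_k` to `v` has determinant `v k`, and maps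
-- the box `{1 ≤ x k ≤ 2, |x i| ≤ ρ i for i ≠ k}` into the swept box.
lemma ofReal_mul_prod_le_volume_sweptBox (v : EuclideanSpace ℝ ι) {ρ : ι → ℝ} {k : ι}
    (hk : 0 ≤ ρ k) :
    ENNReal.ofReal |v k| * ∏ i ∈ Finset.univ.erase k, ENNReal.ofReal (2 * ρ i) ≤
      volume (sweptBox v ρ) := by
  set e : EuclideanSpace ℝ ι := EuclideanSpace.single k 1
  let T := LinearMap.transvection
    (EuclideanSpace.proj k : EuclideanSpace ℝ ι →L[ℝ] ℝ).toLinearMap (v - e)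
  let Q : Set (EuclideanSpace ℝ ι) :=
    {x | ∀ i, x i ∈ Icc (Function.update (-ρ) k 1 i) (Function.update ρ k 2 i)}
  have hdet : LinearMap.det T = v k := by simp [T, e]
  have hQ : volume Q = ∏ i ∈ Finset.univ.erase k, ENNReal.ofReal (2 * ρ i) := by
    rw [volume_setOf_forall_mem_Icc, ← Finset.mul_prod_erase _ _ (Finset.mem_univ k)]
    have hside : ENNReal.ofReal (2 - 1) = 1 := by norm_num
    rw [Function.update_self, Function.update_self, hside, one_mul]
    refine Finset.prod_congr rfl fun i hi ↦ ?_
    have hik := Finset.ne_of_mem_erase hi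
    rw [Function.update_of_ne hik, Function.update_of_ne hik, Pi.neg_apply, sub_neg_eq_add,
      two_mul]
  have hsub : T '' Q ⊆ sweptBox v ρ := by
    rintro _ ⟨x, hx, rfl⟩
    refine ⟨x k • v, ⟨x k, by simpa using hx k, rfl⟩, x - x k • e, fun i ↦ ?_, ?_⟩
    · rcases eq_or_ne i k with rfl | hi
      · simpa [e] using hk
      · simpa [e, hi, abs_le] using hx i
    · change x k • v + (x - x k • e) = x + x k • (v - e)
      rw [smul_sub]
      abel
  calc _ = volume (T '' Q) := by rw [Measure.addHaar_image_linearMap, hdet, hQ]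
    _ ≤ volume (sweptBox v ρ) := measure_mono hsub

end Boxes

section Averages

variable {γ : ℝ → E3} {χ : ℝ → ℝ} {f : E3 → ℝ} {x : E3} {t : ℝ}

lemma avgOp_indicator_one (hγ : Measurable γ) {A : Set E3} (hA : MeasurableSet A) :
    avgOp γ χ t (A.indicator 1) x = ∫ s in {s | x - t • γ s ∈ A}, χ s := by
  have hpre : MeasurableSet {s | x - t • γ s ∈ A} :=
    (measurable_const.sub (hγ.const_smul t)) hA
  rw [avgOp, ← integral_indicator hpre]
  congr 1 with s
  by_cases hs : x - t • γ s ∈ A <;> simp [hs]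

lemma mul_volume_le_avgOp_indicator_one (hγ : Measurable γ) (hχ : Integrable χ)
    (hχ_nonneg : ∀ s, 0 ≤ χ s) {A : Set E3} (hA : MeasurableSet A) {J : Set ℝ}
    (hJ : MeasurableSet J) (hJ_fin : volume J ≠ ⊤) {c : ℝ} (hc : ∀ s ∈ J, c ≤ χ s)
    (hmem : ∀ s ∈ J, x - t • γ s ∈ A) :
    c * volume.real J ≤ avgOp γ χ t (A.indicator 1) x := by
  rw [avgOp_indicator_one hγ hA]
  calc c * volume.real J ≤ ∫ s in J, χ s :=
        setIntegral_ge_of_const_le_real hJ hJ_fin hc hχ.integrableOn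
    _ ≤ _ := setIntegral_mono_set hχ.integrableOn (.of_forall hχ_nonneg)
        (LE.le.eventuallyLE hmem)

lemma abs_avgOp_le (hχ : Integrable χ) {B : ℝ} (hf : ∀ y, |f y| ≤ B) :
    |avgOp γ χ t f x| ≤ ∫ s, B * |χ s| := by
  rw [avgOp, ← Real.norm_eq_abs]
  refine norm_integral_le_of_norm_le (hχ.abs.const_mul B) (.of_forall fun s ↦ ?_)
  rw [Real.norm_eq_abs, abs_mul]
  gcongr
  exact hf _

-- `⨆` of an unbounded family of reals is `0`, hence the detour through a bound uniform in `t`.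
lemma avgOp_le_maxOp (hχ : Integrable χ) {B : ℝ} (hf : ∀ y, |f y| ≤ B) (ht : t ∈ Icc (1 : ℝ) 2) :
    avgOp γ χ t f x ≤ maxOp γ χ f x :=
  (le_abs_self _).trans <| le_ciSup (f := fun t : Icc (1 : ℝ) 2 ↦ |avgOp γ χ t f x|)
    ⟨_, forall_mem_range.2 fun _ ↦ abs_avgOp_le hχ hf⟩ ⟨t, ht⟩

lemma abs_indicator_one_le_one {α : Type*} (A : Set α) (y : α) :
    |A.indicator (1 : α → ℝ) y| ≤ 1 := by
  by_cases hy : y ∈ A <;> simp [hy]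

lemma mul_le_maxOp_of_mem_sweptBox (hγ : Measurable γ) (hχ : Integrable χ)
    (hχ_nonneg : ∀ s, 0 ≤ χ s) {ρ : Fin 3 → ℝ} {K r c : ℝ} (hρ : 0 ≤ ρ) (hK : 0 ≤ K) (hr : 0 ≤ r)
    (hc : ∀ s ∈ Icc 0 r, c ≤ χ s) (hcontact : ∀ s ∈ Icc 0 r, γ s - γ 0 ∈ coordBox (K • ρ))
    (hx : x ∈ sweptBox (γ 0) ρ) :
    c * r ≤ maxOp γ χ ((coordBox ((1 + 2 * K) • ρ)).indicator 1) x := by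
  obtain ⟨_, ⟨t, ht, rfl⟩, u, hu, rfl⟩ := hx
  have hmem : ∀ s ∈ Icc 0 r, t • γ 0 + u - t • γ s ∈ coordBox ((1 + 2 * K) • ρ) := by
    intro s hs
    have ht2 : |t| ≤ 2 := by rw [abs_of_nonneg (by linarith [ht.1])]; exact ht.2
    have hsub : t • γ 0 + u - t • γ s = u - t • (γ s - γ 0) := by rw [smul_sub]; abel
    rw [hsub]
    refine coordBox_mono ?_ (sub_smul_mem_coordBox hu (hcontact s hs))
    gcongr
  have havg := mul_volume_le_avgOp_indicator_one hγ hχ hχ_nonneg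
    (isCompact_coordBox _).measurableSet measurableSet_Icc measure_Icc_lt_top.ne hc hmem
  rw [Real.volume_real_Icc_of_le hr, sub_zero] at havg
  exact havg.trans (avgOp_le_maxOp hχ (abs_indicator_one_le_one _) ht)

end Averages

section Scaling

lemma enorm_mul_measure_rpow_le_eLpNorm {α E F : Type*} [MeasurableSpace α] {μ : Measure α}
    [NormedAddCommGroup E] [NormedAddCommGroup F] {f : α → E} {q : ℝ≥0∞} (hq : q ≠ 0) {s : Set α}
    (hs : MeasurableSet s) (hμs : μ s ≠ 0) {a : F} (ha : ∀ x ∈ s, ‖a‖ ≤ ‖f x‖) :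
    ‖a‖ₑ * μ s ^ (1 / q.toReal) ≤ eLpNorm f q μ := by
  rw [← eLpNorm_indicator_const' hs hμs hq]
  refine eLpNorm_mono fun x ↦ ?_
  by_cases hx : x ∈ s
  · simpa [hx] using ha x hx
  · simp [hx]

lemma le_of_eventually_mul_rpow_le {a C α β : ℝ} (ha : 0 < a)
    (h : ∀ᶠ r in 𝓝[>] 0, a * r ^ α ≤ C * r ^ β) : β ≤ α := by
  by_contra! hlt
  have hlim : Tendsto (fun r : ℝ ↦ C * r ^ (β - α)) (𝓝[>] 0) (𝓝 0) := by
    have h0 := (Real.continuousAt_rpow_const 0 (β - α) (.inr (sub_nonneg.2 hlt.le))).tendsto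
    rw [Real.zero_rpow (sub_pos.2 hlt).ne'] at h0
    simpa using (h0.mono_left nhdsWithin_le_nhds).const_mul C
  refine ha.not_ge (ge_of_tendsto hlim ?_)
  filter_upwards [h, self_mem_nhdsWithin] with r hr (hr0 : 0 < r)
  rwa [Real.rpow_sub hr0, ← mul_div_assoc, le_div_iff₀ (Real.rpow_pos_of_pos hr0 α)]

lemma eventually_nhdsGT_forall_mem_Icc {P : ℝ → Prop} {a : ℝ} (h : ∀ᶠ s in 𝓝[≥] a, P s) :
    ∀ᶠ r in 𝓝[>] a, ∀ s ∈ Icc a r, P s := by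
  obtain ⟨b, hb, hsub⟩ := mem_nhdsGE_iff_exists_Icc_subset.1 h
  filter_upwards [Ioc_mem_nhdsGT hb] with r hr s hs
  exact hsub ⟨hs.1, hs.2.trans hr.2⟩

lemma exponent_le_of_eventually_ofReal_le {a v w α β : ℝ} {C : ℝ≥0} {l m n : ℕ} (ha : 0 < a)
    (hv : 0 < v) (hw : 0 < w)
    (h : ∀ᶠ r in 𝓝[>] 0, ENNReal.ofReal (a * r ^ l) * ENNReal.ofReal (v * r ^ m) ^ α ≤
      C * ENNReal.ofReal (w * r ^ n) ^ β) :
    n * β ≤ l + m * α := by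
  have hpow : ∀ {r u δ : ℝ} (k : ℕ), 0 < r → 0 < u →
      (u * r ^ k) ^ δ = u ^ δ * r ^ (k * δ) := fun k hr hu ↦ by
    rw [Real.mul_rpow hu.le (by positivity), ← Real.rpow_natCast_mul hr.le]
  refine le_of_eventually_mul_rpow_le (a := a * v ^ α) (C := C * w ^ β) (by positivity) ?_
  filter_upwards [h, self_mem_nhdsWithin] with r hr (hr0 : 0 < r)
  rw [ENNReal.ofReal_rpow_of_pos (by positivity), ENNReal.ofReal_rpow_of_pos (by positivity),
    ← ENNReal.ofReal_coe_nnreal, ← ENNReal.ofReal_mul (by positivity),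
    ← ENNReal.ofReal_mul C.coe_nonneg, ENNReal.ofReal_le_ofReal_iff (by positivity),
    hpow m hr0 hv, hpow n hr0 hw] at hr
  calc a * v ^ α * r ^ (l + m * α) = a * r ^ l * (v ^ α * r ^ (m * α)) := by
        rw [Real.rpow_add hr0, Real.rpow_natCast]
        ring
    _ ≤ C * (w ^ β * r ^ (n * β)) := hr
    _ = C * w ^ β * r ^ (n * β) := by ring

end Scaling

section Knapp

/-- The half side lengths `r, r², …, r^d` of the Knapp box at scale `r`. -/
def knappRadii {d : ℕ} (r : ℝ) (i : Fin d) : ℝ :=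
  r ^ ((i : ℕ) + 1)

lemma knappRadii_nonneg {d : ℕ} {r : ℝ} (hr : 0 ≤ r) : 0 ≤ knappRadii (d := d) r :=
  fun _ ↦ pow_nonneg hr _

lemma volume_coordBox_smul_knappRadii {B r : ℝ} (hB : 0 ≤ B) (hr : 0 ≤ r) :
    volume (coordBox (B • knappRadii (d := 3) r)) = ENNReal.ofReal (8 * B ^ 3 * r ^ 6) := by
  have hnonneg : ∀ i, 0 ≤ 2 * (B • knappRadii (d := 3) r) i := fun i ↦
    mul_nonneg zero_le_two (mul_nonneg hB (knappRadii_nonneg hr i))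
  rw [volume_coordBox, ← ENNReal.ofReal_prod_of_nonneg fun i _ ↦ hnonneg i]
  congr 1
  simp only [Fin.prod_univ_three, Pi.smul_apply, smul_eq_mul, knappRadii, Fin.isValue,
    Fin.val_zero, Fin.val_one, Fin.val_two]
  ring

lemma le_volume_sweptBox_knappRadii (v : E3) {r : ℝ} (hr : 0 ≤ r) :
    ENNReal.ofReal (4 * |v 2| * r ^ 3) ≤ volume (sweptBox v (knappRadii r)) := by
  refine le_of_eq_of_le ?_ (ofReal_mul_prod_le_volume_sweptBox v (knappRadii_nonneg hr 2))
  have hne : (Finset.univ.erase 2 : Finset (Fin 3)) = {0, 1} := by decide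
  rw [hne, Finset.prod_pair (by decide), ← ENNReal.ofReal_mul (by simp [knappRadii, hr]),
    ← ENNReal.ofReal_mul (abs_nonneg _)]
  congr 1
  simp only [knappRadii, Fin.isValue, Fin.val_zero, Fin.val_one]
  ring

lemma exists_eventually_sub_mem_coordBox_knappRadii {d : ℕ} {γ : ℝ → EuclideanSpace ℝ (Fin d)}
    (hcontact : ∀ i : Fin d, (fun s ↦ γ s i - γ 0 i) =O[𝓝[≥] 0] fun s ↦ s ^ ((i : ℕ) + 1)) :
    ∃ K : ℝ, 0 ≤ K ∧ ∀ᶠ r in 𝓝[>] 0, ∀ s ∈ Icc 0 r,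
      γ s - γ 0 ∈ coordBox (K • knappRadii r) := by
  choose K hK hbound using fun i ↦ (hcontact i).exists_nonneg
  have hall : ∀ᶠ s in 𝓝[≥] (0 : ℝ), ∀ i, |γ s i - γ 0 i| ≤ K i * |s ^ ((i : ℕ) + 1)| :=
    eventually_all.2 fun i ↦ (hbound i).bound
  refine ⟨∑ i, K i, Finset.sum_nonneg fun i _ ↦ hK i, ?_⟩
  filter_upwards [eventually_nhdsGT_forall_mem_Icc hall] with r hr s hs i
  calc |γ s i - γ 0 i| ≤ K i * |s ^ ((i : ℕ) + 1)| := hr s hs i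
    _ = K i * s ^ ((i : ℕ) + 1) := by rw [abs_of_nonneg (pow_nonneg hs.1 _)]
    _ ≤ (∑ j, K j) * r ^ ((i : ℕ) + 1) := by
        have hKi : K i ≤ ∑ j, K j := Finset.single_le_sum (fun i _ ↦ hK i) (Finset.mem_univ i)
        exact mul_le_mul hKi (pow_le_pow_left₀ hs.1 hs.2 _) (pow_nonneg hs.1 _)
          (Finset.sum_nonneg fun i _ ↦ hK i)

variable {γ : ℝ → E3} {χ : ℝ → ℝ} {p q : ℝ≥0∞} {C : ℝ≥0}

lemma knapp_inequality (hγ : Measurable γ) (hγ30 : γ 0 2 ≠ 0) (hχ : Integrable χ)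
    (hχ_nonneg : ∀ s, 0 ≤ χ s) (hq : q ≠ 0)
    (hbound : ∀ f : E3 → ℝ, Measurable f → HasCompactSupport f → (∃ B : ℝ, ∀ x, |f x| ≤ B) →
      eLpNorm (maxOp γ χ f) q volume ≤ C * eLpNorm f p volume)
    {K r c : ℝ} (hK : 0 ≤ K) (hr : 0 < r) (hc0 : 0 ≤ c) (hc : ∀ s ∈ Icc 0 r, c ≤ χ s)
    (hcontact : ∀ s ∈ Icc 0 r, γ s - γ 0 ∈ coordBox (K • knappRadii r)) :
    ENNReal.ofReal (c * r) * ENNReal.ofReal (4 * |γ 0 2| * r ^ 3) ^ (1 / q.toReal) ≤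
      C * ENNReal.ofReal (8 * (1 + 2 * K) ^ 3 * r ^ 6) ^ (1 / p.toReal) := by
  set S := sweptBox (γ 0) (knappRadii r)
  set A : Set E3 := coordBox ((1 + 2 * K) • knappRadii r)
  have hA : IsCompact A := isCompact_coordBox _
  have hS : ENNReal.ofReal (4 * |γ 0 2| * r ^ 3) ≤ volume S :=
    le_volume_sweptBox_knappRadii _ hr.le
  have hS0 : volume S ≠ 0 :=
    ((ENNReal.ofReal_pos.2 (by positivity)).trans_le hS).ne'
  have hlower : ∀ x ∈ S, ‖c * r‖ ≤ ‖maxOp γ χ (A.indicator 1) x‖ := fun x hx ↦ by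
    rw [Real.norm_of_nonneg (by positivity)]
    exact (mul_le_maxOp_of_mem_sweptBox hγ hχ hχ_nonneg (knappRadii_nonneg hr.le) hK hr.le hc
      hcontact hx).trans (le_abs_self _)
  calc _ ≤ ‖c * r‖ₑ * volume S ^ (1 / q.toReal) := by
        rw [Real.enorm_of_nonneg (by positivity)]
        gcongr
    _ ≤ eLpNorm (maxOp γ χ (A.indicator 1)) q volume :=
        enorm_mul_measure_rpow_le_eLpNorm hq (isCompact_sweptBox _ _).measurableSet hS0 hlower
    _ ≤ C * eLpNorm (A.indicator 1) p volume :=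
        hbound _ (measurable_one.indicator hA.measurableSet)
          (.of_support_subset_isCompact hA support_indicator_subset)
          ⟨1, abs_indicator_one_le_one A⟩
    _ ≤ C * volume A ^ (1 / p.toReal) := by
        gcongr
        exact (eLpNorm_indicator_const_le (1 : ℝ) p).trans_eq (by simp)
    _ = _ := by rw [volume_coordBox_smul_knappRadii (by positivity) hr.le]

theorem knapp_necessary_condition_general (hγ : Measurable γ)
    (hcontact : ∀ i : Fin 3, (fun s ↦ γ s i - γ 0 i) =O[𝓝[≥] 0] fun s ↦ s ^ ((i : ℕ) + 1))
    (hγ30 : γ 0 2 ≠ 0) (hχ : Integrable χ) (hχ_cont : ContinuousAt χ 0)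
    (hχ_nonneg : ∀ s, 0 ≤ χ s) (hχ0 : 0 < χ 0) (hp : p ≠ 0) (hq : q ≠ 0)
    (hbound : ∀ f : E3 → ℝ, Measurable f → HasCompactSupport f → (∃ B : ℝ, ∀ x, |f x| ≤ B) →
      eLpNorm (maxOp γ χ f) q volume ≤ C * eLpNorm f p volume) :
    6 / p ≤ 1 + 3 / q := by
  obtain ⟨K, hK, hbox⟩ := exists_eventually_sub_mem_coordBox_knappRadii hcontact
  have hlower : ∀ᶠ r in 𝓝[>] 0, ∀ s ∈ Icc 0 r, χ 0 / 2 ≤ χ s :=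
    eventually_nhdsGT_forall_mem_Icc <| nhdsWithin_le_nhds <|
      hχ_cont.eventually_const_le (half_lt_self hχ0)
  have hreal : (6 : ℕ) * (1 / p.toReal) ≤ (1 : ℕ) + (3 : ℕ) * (1 / q.toReal) := by
    refine exponent_le_of_eventually_ofReal_le (C := C) (half_pos hχ0)
      (v := 4 * |γ 0 2|) (by positivity) (w := 8 * (1 + 2 * K) ^ 3) (by positivity) ?_
    filter_upwards [hbox, hlower, self_mem_nhdsWithin] with r hr hc hr0
    rw [pow_one]
    exact knapp_inequality hγ hγ30 hχ hχ_nonneg hq hbound hK hr0 (half_pos hχ0).le hc hr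
  have hp_fin : 6 / p ≠ ⊤ := ENNReal.div_ne_top (by simp) hp
  have hq_fin : 3 / q ≠ ⊤ := ENNReal.div_ne_top (by simp) hq
  rw [← ENNReal.toReal_le_toReal hp_fin (by finiteness), ENNReal.toReal_add (by simp) hq_fin]
  simpa [ENNReal.toReal_div, div_eq_mul_inv] using hreal

end Knapp

/-- the Knapp example necessary condition `6/p ≤ 1 + 3/q`. -/
theorem knapp_necessary_condition
    (γ : ℝ → E3) (hγ : ContDiff ℝ (⊤ : ℕ∞) γ)
    (c₀ : ℝ) (hc₀ : 0 < c₀)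
    (hnondeg : ∀ s ∈ I1,
      c₀ ≤ |det3 (iteratedDeriv 1 γ s) (iteratedDeriv 2 γ s) (iteratedDeriv 3 γ s)|)
    (hγ1 : iteratedDeriv 1 γ 0 = EuclideanSpace.single 0 1)
    (hγ2 : iteratedDeriv 2 γ 0 = EuclideanSpace.single 1 1)
    (hγ3 : iteratedDeriv 3 γ 0 = EuclideanSpace.single 2 1)
    (hγ30 : 0 < γ 0 2)
    (χ : ℝ → ℝ) (hχsm : ContDiff ℝ (⊤ : ℕ∞) χ) (hχpos : ∀ s, 0 ≤ χ s)
    (hχsupp : Function.support χ ⊆ Set.Ioo (-1 : ℝ) 1) (hχ0 : 0 < χ 0)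
    (p q : ℝ≥0∞) (hp : 1 ≤ p) (hq : 1 ≤ q)
    (C : ℝ) (hbound : ∀ f : E3 → ℝ, Measurable f → HasCompactSupport f →
      (∃ B : ℝ, ∀ x, |f x| ≤ B) →
      eLpNorm (maxOp γ χ f) q volume ≤ ENNReal.ofReal C * eLpNorm f p volume) :
    6 / p ≤ 1 + 3 / q := by
  have hflag : ∀ i : Fin 3, ∀ k ∈ Finset.Icc 1 (i : ℕ), iteratedDeriv k γ 0 i = 0 := by
    intro i k hk
    obtain ⟨hk1, hki⟩ := Finset.mem_Icc.1 hk
    fin_cases i <;> dsimp at hki <;> interval_cases k <;> simp [hγ1, hγ2]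
  have hcontact (i : Fin 3) : (fun s ↦ γ s i - γ 0 i) =O[𝓝 0] fun s ↦ s ^ ((i : ℕ) + 1) := by
    simpa using isBigO_apply_sub_pow_succ_of_iteratedDeriv_apply_eq_zero
      (contDiff_infty.1 hγ 3) hflag i
  have hχ : Integrable χ := hχsm.continuous.integrable_of_hasCompactSupport <|
    .of_support_subset_isCompact isCompact_Icc (hχsupp.trans Ioo_subset_Icc_self)
  exact knapp_necessary_condition_general (C := C.toNNReal) hγ.continuous.measurable
    (fun i ↦ (hcontact i).mono nhdsWithin_le_nhds) hγ30.ne' hχ hχsm.continuous.continuousAt hχpos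
    hχ0 (zero_lt_one.trans_le hp).ne' (zero_lt_one.trans_le hq).ne' hbound
end
end

section
/- Let γ : I → ℝ³ be a smooth non-degenerate curve and let χ ∈ C^∞(ℝ) be non-negative, supported in the interior of I, with ∫_ℝ χ(s) ds > 0. Let 1 ≤ p, q ≤ ∞. If there exists a constant C such that ‖M_γ f‖_{L^q(ℝ³)} ≤ C ‖f‖_{L^p(ℝ³)} for all bounded, compactly supported measurable functions f on ℝ³, then 2/p ≤ 3/q. -/
/-!
Test the estimate on the indicator of the `δ`-neighbourhood of `-γ(I)`. For `|x| ≤ δ` every point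
`x - γ(s)` lies in that neighbourhood, so the average at `t = 1` equals `∫ χ` on the `δ`-ball
and its `L^q` norm is at least a constant times `δ^(3/q)`. The curve is covered by `O(1/δ)` balls
of radius `O(δ)`, so the neighbourhood has measure `O(δ²)` and the test function has `L^p` norm
`O(δ^(2/p))`. Letting `δ → 0` compares the exponents.
-/

open MeasureTheory Real Set
open scoped ENNReal ContDiff

noncomputable section

open Filter Topology Metric Module
open scoped NNReal Pointwise

theorem le_of_eventually_mul_rpow_le_mul_rpow {a b : ℝ} {c C : ℝ≥0∞} (hc : c ≠ 0) (hC : C ≠ ⊤)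
    (h : ∀ᶠ δ : ℝ≥0 in 𝓝[>] 0, c * (δ : ℝ≥0∞) ^ a ≤ C * (δ : ℝ≥0∞) ^ b) : b ≤ a := by
  by_contra! hab
  have hlim : Tendsto (fun δ : ℝ≥0 ↦ C * (δ : ℝ≥0∞) ^ (b - a)) (𝓝[>] 0) (𝓝 0) :=
    (ENNReal.tendsto_const_mul_rpow_nhds_zero_of_pos hC (sub_pos.2 hab)).comp
      ((ENNReal.continuous_coe.tendsto' 0 0 ENNReal.coe_zero).mono_left nhdsWithin_le_nhds)
  refine hc (nonpos_iff_eq_zero.1 (ge_of_tendsto hlim ?_))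
  filter_upwards [h, self_mem_nhdsWithin] with δ hδ (hδpos : 0 < δ)
  have hδ0 : (δ : ℝ≥0∞) ≠ 0 := by simpa using hδpos.ne'
  calc c = c * (δ : ℝ≥0∞) ^ a * (δ : ℝ≥0∞) ^ (-a) := by
        rw [mul_assoc, ← ENNReal.rpow_add _ _ hδ0 ENNReal.coe_ne_top, add_neg_cancel,
          ENNReal.rpow_zero, mul_one]
    _ ≤ C * (δ : ℝ≥0∞) ^ b * (δ : ℝ≥0∞) ^ (-a) := by gcongr
    _ = C * (δ : ℝ≥0∞) ^ (b - a) := by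
        rw [mul_assoc, ← ENNReal.rpow_add _ _ hδ0 ENNReal.coe_ne_top, sub_eq_add_neg]

theorem ennreal_div_le_div_of_toReal_le {x y p q : ℝ≥0∞} (hx : x ≠ ⊤) (hy : y ≠ ⊤) (hp : p ≠ 0)
    (hq : q ≠ 0) (h : x.toReal / p.toReal ≤ y.toReal / q.toReal) : x / p ≤ y / q := by
  rwa [← ENNReal.toReal_le_toReal (ENNReal.div_ne_top hx hp) (ENNReal.div_ne_top hy hq),
    ENNReal.toReal_div, ENNReal.toReal_div]

/-! ### Coverings and Minkowski content -/

theorem exists_finset_isCover_Icc {a b : ℝ} (hab : a ≤ b) {ε : ℝ≥0} (hε : 0 < ε) :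
    ∃ N : Finset ℝ, (N : Set ℝ) ⊆ Icc a b ∧ IsCover ε (Icc a b) (N : Set ℝ) ∧
      (N.card : ℝ) * ε ≤ b - a + ε := by
  have hε' : (0 : ℝ) < ε := hε
  have hquot : 0 ≤ (b - a) / ε := div_nonneg (sub_nonneg.2 hab) hε'.le
  refine ⟨(Finset.range (⌊(b - a) / ε⌋₊ + 1)).image fun i : ℕ ↦ a + i * ε, ?_, ?_, ?_⟩
  · simp only [Finset.coe_image, Finset.coe_range, image_subset_iff]
    intro i hi
    have hi' : (i : ℝ) * ε ≤ b - a := by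
      rw [← le_div_iff₀ hε', ← Nat.le_floor_iff hquot]
      exact Nat.lt_succ_iff.1 hi
    exact ⟨le_add_of_nonneg_right (by positivity), by linarith⟩
  · rw [isCover_iff_subset_iUnion_closedBall]
    intro s hs
    have hs0 : 0 ≤ (s - a) / ε := div_nonneg (sub_nonneg.2 hs.1) hε'.le
    have hlower : (⌊(s - a) / ε⌋₊ : ℝ) * ε ≤ s - a := (le_div_iff₀ hε').1 (Nat.floor_le hs0)
    have hupper : s - a < (⌊(s - a) / ε⌋₊ + 1 : ℝ) * ε :=
      (div_lt_iff₀ hε').1 (Nat.lt_floor_add_one _)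
    have hmem : ⌊(s - a) / ε⌋₊ < ⌊(b - a) / ε⌋₊ + 1 :=
      Nat.lt_succ_iff.2 (Nat.floor_le_floor (by gcongr; exact hs.2))
    refine mem_biUnion (Finset.mem_image_of_mem _ (Finset.mem_range.2 hmem)) ?_
    rw [mem_closedBall, Real.dist_eq, abs_le]
    constructor <;> linarith
  · calc (Finset.card _ : ℝ) * ε ≤ (⌊(b - a) / ε⌋₊ + 1 : ℝ) * ε := by
          gcongr
          exact_mod_cast Finset.card_image_le.trans (Finset.card_range _).le
      _ ≤ ((b - a) / ε + 1) * ε := by gcongr; exact Nat.floor_le hquot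
      _ = b - a + ε := by field_simp

theorem isCover_image_of_lipschitzOnWith {X Y : Type*} [PseudoEMetricSpace X]
    [PseudoEMetricSpace Y] {f : X → Y} {s N : Set X} {ε L : ℝ≥0} (hN : IsCover ε s N)
    (hNs : N ⊆ s) (hf : LipschitzOnWith L f s) : IsCover (L * ε) (f '' s) (f '' N) := by
  rintro _ ⟨x, hx, rfl⟩
  obtain ⟨y, hy, hxy : edist x y ≤ ε⟩ := hN hx
  refine ⟨f y, mem_image_of_mem f hy, ?_⟩
  calc edist (f x) (f y) ≤ L * edist x y := hf hx (hNs hy)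
    _ ≤ (L * ε : ℝ≥0) := by push_cast; gcongr

/-- `K` has finite upper Minkowski content in codimension `m`: the measure of its closed
`δ`-neighbourhood is `O(δ ^ m)` as `δ → 0⁺`. This is the only property of the curve that the
test function sees. The codimension is real so that fractal sets are allowed. -/
def HasFiniteMinkowskiContent {X : Type*} [PseudoEMetricSpace X] [MeasurableSpace X]
    (μ : Measure X) (K : Set X) (m : ℝ≥0) : Prop :=
  ∃ A : ℝ≥0∞, A ≠ ⊤ ∧ ∀ᶠ δ : ℝ≥0 in 𝓝[>] 0, μ (cthickening δ K) ≤ A * (δ : ℝ≥0∞) ^ (m : ℝ)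

/-! ### Averages over translates -/

section TranslateAverage

variable {S E : Type*} [MeasurableSpace S] {ν : Measure S} {γ : S → E} {χ : S → ℝ}

/-- The average `x ↦ ∫ f(x - γ(s)) χ(s) dν(s)` over the translates of a parametrized set, i.e. the
convolution of `f` with the image under `γ` of the density `χ dν`. The averaging operator `A_t` is
the case of the curve `t • γ`. -/
def translateAverage [Sub E] (ν : Measure S) (γ : S → E) (χ : S → ℝ) (f : E → ℝ) (x : E) : ℝ :=
  ∫ s, f (x - γ s) * χ s ∂ν

theorem abs_translateAverage_le [Sub E] (hχ : Integrable χ ν) {f : E → ℝ} {B : ℝ}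
    (hf : ∀ x, |f x| ≤ B) (x : E) : |translateAverage ν γ χ f x| ≤ ∫ s, B * |χ s| ∂ν := by
  rw [translateAverage, ← Real.norm_eq_abs]
  refine norm_integral_le_of_norm_le (hχ.abs.const_mul B) (ae_of_all _ fun s ↦ ?_)
  rw [Real.norm_eq_abs, abs_mul]
  exact mul_le_mul_of_nonneg_right (hf _) (abs_nonneg _)

variable [SeminormedAddCommGroup E] {K : Set E}

theorem translateAverage_indicator_neg_cthickening {δ : ℝ}
    (hγ : MapsTo γ (Function.support χ) K) {x : E} (hx : x ∈ closedBall 0 δ) :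
    translateAverage ν γ χ ((-cthickening δ K).indicator fun _ ↦ 1) x = ∫ s, χ s ∂ν := by
  refine integral_congr_ae (ae_of_all ν fun s ↦ ?_)
  by_cases hs : χ s = 0
  · simp [hs]
  have hmem : x - γ s ∈ -cthickening δ K := by
    refine mem_cthickening_of_dist_le _ (γ s) δ K (hγ hs) ?_
    simpa [dist_eq_norm] using hx
  simp only [indicator_of_mem hmem, one_mul]

theorem enorm_integral_mul_le_eLpNorm_translateAverage [MeasurableSpace E]
    [OpensMeasurableSpace E] {μ : Measure E} [μ.IsOpenPosMeasure] {q : ℝ≥0∞} (hq : q ≠ 0)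
    (hγ : MapsTo γ (Function.support χ) K) {δ : ℝ≥0} (hδ : 0 < δ) :
    ‖∫ s, χ s ∂ν‖ₑ * μ (closedBall 0 δ) ^ (1 / q.toReal) ≤
      eLpNorm (translateAverage ν γ χ ((-cthickening δ K).indicator fun _ ↦ 1)) q μ := by
  rw [← eLpNorm_indicator_const' measurableSet_closedBall
    (measure_closedBall_pos μ 0 (NNReal.coe_pos.2 hδ)).ne' hq]
  refine eLpNorm_mono fun x ↦ ?_
  by_cases hx : x ∈ closedBall 0 δ
  · rw [indicator_of_mem hx, translateAverage_indicator_neg_cthickening hγ hx]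
  · simp [indicator_of_notMem hx]

end TranslateAverage

/-! ### Necessary conditions from Minkowski content -/

section Haar

variable {E : Type*} [NormedAddCommGroup E] [NormedSpace ℝ E] [FiniteDimensional ℝ E]
  [MeasurableSpace E] [BorelSpace E] {μ : Measure E} [μ.IsAddHaarMeasure]

theorem measure_closedBall_eq_pow_mul (x : E) (r : ℝ≥0) :
    μ (closedBall x r) = (r : ℝ≥0∞) ^ finrank ℝ E * μ (closedBall 0 1) := by
  rw [Measure.addHaar_closedBall' μ x r.coe_nonneg, ENNReal.ofReal_pow r.coe_nonneg,
    ENNReal.ofReal_coe_nnreal]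

theorem measure_cthickening_le_of_isCover {K : Set E} {N : Finset E} {ε : ℝ≥0}
    (hN : IsCover ε K (N : Set E)) (δ : ℝ≥0) :
    μ (cthickening δ K) ≤
      N.card * (((δ + ε : ℝ≥0) : ℝ≥0∞) ^ finrank ℝ E * μ (closedBall 0 1)) := by
  have hNclosed : IsClosed (N : Set E) := N.finite_toSet.isClosed
  have hcov : cthickening δ K ⊆ ⋃ y ∈ N, closedBall y (δ + ε : ℝ≥0) :=
    calc cthickening δ K ⊆ cthickening δ (cthickening ε (N : Set E)) :=
          cthickening_subset_of_subset _ (hN.subset_cthickening hNclosed)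
      _ ⊆ cthickening (δ + ε) (N : Set E) := cthickening_cthickening_subset δ.2 ε.2 _
      _ = ⋃ y ∈ N, closedBall y (δ + ε : ℝ≥0) :=
          hNclosed.cthickening_eq_biUnion_closedBall (add_nonneg δ.2 ε.2)
  calc μ (cthickening δ K) ≤ ∑ y ∈ N, μ (closedBall y (δ + ε : ℝ≥0)) :=
        (measure_mono hcov).trans (measure_biUnion_finset_le N _)
    _ = _ := by simp only [measure_closedBall_eq_pow_mul, Finset.sum_const, nsmul_eq_mul]

theorem hasFiniteMinkowskiContent_image_Icc {n : ℕ} (hn : finrank ℝ E = n + 1) {γ : ℝ → E}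
    {a b : ℝ} {L : ℝ≥0} (hγ : LipschitzOnWith L γ (Icc a b)) :
    HasFiniteMinkowskiContent μ (γ '' Icc a b) n := by
  classical
  rcases lt_or_ge b a with hba | hab
  · exact ⟨0, ENNReal.zero_ne_top, by simp [Icc_eq_empty_of_lt hba]⟩
  refine ⟨ENNReal.ofReal (b - a + 1) * (1 + L) ^ (n + 1) * μ (closedBall 0 1),
    ENNReal.mul_ne_top (by finiteness) measure_closedBall_lt_top.ne, ?_⟩
  filter_upwards [Ioc_mem_nhdsGT zero_lt_one] with δ hδ
  obtain ⟨N, hNsub, hNcover, hNcard⟩ := exists_finset_isCover_Icc hab hδ.1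
  have hcover : IsCover (L * δ) (γ '' Icc a b) (N.image γ : Finset E) := by
    simpa using isCover_image_of_lipschitzOnWith hNcover hNsub hγ
  have hcard : ((N.image γ).card : ℝ≥0∞) * δ ≤ ENNReal.ofReal (b - a + 1) :=
    calc ((N.image γ).card : ℝ≥0∞) * δ ≤ N.card * δ := by gcongr; exact Finset.card_image_le
      _ = ENNReal.ofReal (N.card * δ) := by simp [ENNReal.ofReal_mul]
      _ ≤ ENNReal.ofReal (b - a + 1) :=
          ENNReal.ofReal_le_ofReal (hNcard.trans (by gcongr; exact hδ.2))
  calc μ (cthickening δ (γ '' Icc a b))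
      ≤ (N.image γ).card * (((δ + L * δ : ℝ≥0) : ℝ≥0∞) ^ (n + 1) * μ (closedBall 0 1)) := by
        simpa only [hn] using measure_cthickening_le_of_isCover hcover δ
    _ = ((N.image γ).card * δ) * (1 + L) ^ (n + 1) * μ (closedBall 0 1) * (δ : ℝ≥0∞) ^ n := by
        rw [show δ + L * δ = (1 + L) * δ by ring]
        push_cast
        rw [mul_pow]
        ring
    _ ≤ ENNReal.ofReal (b - a + 1) * (1 + L) ^ (n + 1) * μ (closedBall 0 1) *
          (δ : ℝ≥0∞) ^ ((n : ℝ≥0) : ℝ) := by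
        rw [NNReal.coe_natCast, ENNReal.rpow_natCast]
        gcongr

theorem codim_div_le_finrank_div_of_translateAverage_bound {S : Type*} [MeasurableSpace S]
    {ν : Measure S} {γ : S → E} {χ : S → ℝ} {K : Set E} {p q : ℝ≥0∞} {m : ℝ≥0}
    (hKb : Bornology.IsBounded K) (hKm : HasFiniteMinkowskiContent μ K m)
    (hγ : MapsTo γ (Function.support χ) K) (hχ : ∫ s, χ s ∂ν ≠ 0) (hp : p ≠ 0) (hq : q ≠ 0)
    {C : ℝ≥0∞} (hC : C ≠ ⊤) (hbound : ∀ T : Set E, IsCompact T →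
      eLpNorm (translateAverage ν γ χ (T.indicator fun _ ↦ 1)) q μ ≤
        C * eLpNorm (T.indicator fun _ ↦ (1 : ℝ)) p μ) :
    (m : ℝ≥0∞) / p ≤ finrank ℝ E / q := by
  obtain ⟨A, hA, hKA⟩ := hKm
  set c := ‖∫ s, χ s ∂ν‖ₑ
  set v := μ (closedBall (0 : E) 1)
  have hv : v ^ (1 / q.toReal) ≠ 0 :=
    (ENNReal.rpow_pos (measure_closedBall_pos μ 0 one_pos) measure_closedBall_lt_top.ne).ne'
  suffices (m : ℝ) * (1 / p.toReal) ≤ finrank ℝ E * (1 / q.toReal) from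
    ennreal_div_le_div_of_toReal_le (by finiteness) (by finiteness) hp hq
      (by simpa [div_eq_mul_inv] using this)
  refine le_of_eventually_mul_rpow_le_mul_rpow (c := c * v ^ (1 / q.toReal))
    (C := C * A ^ (1 / p.toReal)) (mul_ne_zero (enorm_ne_zero.2 hχ) hv) (by finiteness) ?_
  filter_upwards [hKA, self_mem_nhdsWithin] with δ hKδ hδ
  have hcompact : IsCompact (-cthickening δ K) :=
    (isCompact_of_isClosed_isBounded isClosed_cthickening hKb.cthickening).neg
  calc c * v ^ (1 / q.toReal) * (δ : ℝ≥0∞) ^ (finrank ℝ E * (1 / q.toReal))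
      = c * μ (closedBall 0 δ) ^ (1 / q.toReal) := by
        rw [measure_closedBall_eq_pow_mul, ENNReal.mul_rpow_of_nonneg _ _ (by positivity),
          ENNReal.rpow_mul, ENNReal.rpow_natCast, mul_assoc, mul_comm (v ^ _)]
    _ ≤ C * eLpNorm ((-cthickening δ K).indicator fun _ ↦ (1 : ℝ)) p μ :=
        (enorm_integral_mul_le_eLpNorm_translateAverage hq hγ hδ).trans (hbound _ hcompact)
    _ ≤ C * μ (cthickening δ K) ^ (1 / p.toReal) := by
        gcongr
        rw [← Measure.measure_neg μ (cthickening δ K), ← one_mul (μ _ ^ _), ← enorm_one (G := ℝ)]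
        exact eLpNorm_indicator_const_le (1 : ℝ) p
    _ ≤ C * (A * (δ : ℝ≥0∞) ^ (m : ℝ)) ^ (1 / p.toReal) := by gcongr
    _ = C * A ^ (1 / p.toReal) * (δ : ℝ≥0∞) ^ (m * (1 / p.toReal)) := by
        rw [ENNReal.mul_rpow_of_nonneg _ _ (by positivity), ENNReal.rpow_mul, mul_assoc]

theorem dimensional_necessary_condition_general {n : ℕ} (hn : finrank ℝ E = n + 1)
    {ν : Measure ℝ} {γ : ℝ → E} {a b : ℝ} {L : ℝ≥0} (hγ : LipschitzOnWith L γ (Icc a b))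
    {χ : ℝ → ℝ} (hχsupp : Function.support χ ⊆ Icc a b) (hχint : ∫ s, χ s ∂ν ≠ 0)
    {p q : ℝ≥0∞} (hp : p ≠ 0) (hq : q ≠ 0) {C : ℝ≥0∞} (hC : C ≠ ⊤)
    (hbound : ∀ T : Set E, IsCompact T →
      eLpNorm (translateAverage ν γ χ (T.indicator fun _ ↦ 1)) q μ ≤
        C * eLpNorm (T.indicator fun _ ↦ (1 : ℝ)) p μ) :
    (n : ℝ≥0∞) / p ≤ (n + 1) / q := by
  have hKb : Bornology.IsBounded (γ '' Icc a b) :=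
    (isCompact_Icc.image_of_continuousOn hγ.continuousOn).isBounded
  simpa [hn] using codim_div_le_finrank_div_of_translateAverage_bound hKb
    (hasFiniteMinkowskiContent_image_Icc hn hγ) ((mapsTo_image γ _).mono_left hχsupp)
    hχint hp hq hC hbound

end Haar

/-! ### The local maximal function -/

theorem avgOp_eq_translateAverage (γ : ℝ → E3) (χ : ℝ → ℝ) (t : ℝ) :
    avgOp γ χ t = translateAverage volume (t • γ) χ :=
  rfl

theorem abs_avgOp_le_maxOp {γ : ℝ → E3} {χ : ℝ → ℝ} (hχ : Integrable χ) {f : E3 → ℝ} {B : ℝ}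
    (hf : ∀ x, |f x| ≤ B) {t : ℝ} (ht : t ∈ Icc (1 : ℝ) 2) (x : E3) :
    |avgOp γ χ t f x| ≤ maxOp γ χ f x :=
  le_ciSup (f := fun t : Icc (1 : ℝ) 2 ↦ |avgOp γ χ t f x|)
    ⟨∫ s, B * |χ s|, forall_mem_range.2 fun t ↦ abs_translateAverage_le (γ := t.1 • γ) hχ hf x⟩
    ⟨t, ht⟩

theorem eLpNorm_translateAverage_le_eLpNorm_maxOp {γ : ℝ → E3} {χ : ℝ → ℝ} (hχ : Integrable χ)
    {f : E3 → ℝ} {B : ℝ} (hf : ∀ x, |f x| ≤ B) (q : ℝ≥0∞) (μ : Measure E3) :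
    eLpNorm (translateAverage volume γ χ f) q μ ≤ eLpNorm (maxOp γ χ f) q μ := by
  rw [← one_smul ℝ γ, ← avgOp_eq_translateAverage, one_smul]
  exact eLpNorm_mono_real (abs_avgOp_le_maxOp hχ hf (left_mem_Icc.2 one_le_two))

/-- the dimensional necessary condition `2/p ≤ 3/q`. -/
theorem dimensional_necessary_condition
    (γ : ℝ → E3) (hγ : ContDiff ℝ (⊤ : ℕ∞) γ)
    (c₀ : ℝ) (hc₀ : 0 < c₀)
    (hnondeg : ∀ s ∈ I1,
      c₀ ≤ |det3 (iteratedDeriv 1 γ s) (iteratedDeriv 2 γ s) (iteratedDeriv 3 γ s)|)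
    (χ : ℝ → ℝ) (hχsm : ContDiff ℝ (⊤ : ℕ∞) χ) (hχpos : ∀ s, 0 ≤ χ s)
    (hχsupp : Function.support χ ⊆ Set.Ioo (-1 : ℝ) 1)
    (hχint : 0 < ∫ s : ℝ, χ s)
    (p q : ℝ≥0∞) (hp : 1 ≤ p) (hq : 1 ≤ q)
    (C : ℝ) (hbound : ∀ f : E3 → ℝ, Measurable f → HasCompactSupport f →
      (∃ B : ℝ, ∀ x, |f x| ≤ B) →
      eLpNorm (maxOp γ χ f) q volume ≤ ENNReal.ofReal C * eLpNorm f p volume) :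
    2 / p ≤ 3 / q := by
  obtain ⟨L, hL⟩ := ((hγ.of_le (by simp)).locallyLipschitz.locallyLipschitzOn
    (s := I1)).exists_lipschitzOnWith_of_compact isCompact_Icc
  have hsupp : Function.support χ ⊆ I1 := hχsupp.trans Ioo_subset_Icc_self
  have hχ : Integrable χ := .of_integral_ne_zero hχint.ne'
  have hone (T : Set E3) (x : E3) : |T.indicator (fun _ ↦ (1 : ℝ)) x| ≤ 1 := by
    by_cases hx : x ∈ T <;> simp [hx]
  exact_mod_cast dimensional_necessary_condition_general (μ := volume) (n := 2) (by simp) hL hsupp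
    hχint.ne' (zero_lt_one.trans_le hp).ne' (zero_lt_one.trans_le hq).ne' ENNReal.ofReal_ne_top
    fun T hT ↦ (eLpNorm_translateAverage_le_eLpNorm_maxOp hχ (hone T) q volume).trans
      (hbound _ (measurable_const.indicator hT.measurableSet)
        (.of_support_subset_isCompact hT support_indicator_subset) ⟨1, hone T⟩)
end
end
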